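/- Let n ≥ 2, λ > 0, L > 2λ, let g = 4π ∑_{j=1}^{k₁} m_j δ_{p_j}, h = 4π ∑_{j=1}^{k₂} n_j δ_{q_j} with m_j, n_j ∈ ℕ, and let Ω ⊂ ℤⁿ be a connected finite subset containing all the points p_j and q_j. Let (u_k, v_k) be the iterative sequence with u₀ = v₀ = 0, (Δ − L)u_k = λ e^{v_{k−1}} (e^{u_{k−1}} − 1) + g − L u_{k−1} in Ω, (Δ − L)v_k = λ e^{u_{k−1}} (e^{v_{k−1}} − 1) + h − L v_{k−1} in Ω, u_k = v_k = 0 on δΩ. Then u_k and v_k converge pointwise on Ω̄ to functions u_Ω and v_Ω satisfying Δu_Ω = λ e^{v_Ω} (e^{u_Ω} − 1) + g in Ω, Δv_Ω = λ e^{u_Ω} (e^{v_Ω} − 1) + h in Ω, and u_Ω = v_Ω = 0 on δΩ. -/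

import Mathlib

/-!
The scheme is a monotone iteration. On `a, b ≤ 0` the nonlinearity
`F(a, b) = λ e^b (e^a - 1) - L a` is decreasing in both variables (`nonlin_antitone`), because
`λ ≤ L`. Together with the maximum principle for `Δ - L` on a finite set (`max_principle`) this
yields, by induction on `k`, `u_{k+1} ≤ u_k ≤ 0` and `v_{k+1} ≤ v_k ≤ 0`.

For the lower bound, the convex quadratic `w(x) = A x_i² - B` has `Δw = 2A`. With `A` large it
satisfies `Δw ≥ g` on `Ω`, and with `B` large it is nonpositive on the closure of `Ω`. Since
`λ e^v (e^u - 1) ≤ 0` for `u ≤ 0`, the maximum principle gives `w ≤ u_k` for every `k`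
(`iter_lower_bound`), and in the same way for `v_k`. The monotone bounded sequences converge
pointwise, and the limit equation follows because `Δ` only involves finitely many points.
-/

open Filter Real

noncomputable section

namespace CS

abbrev Lat (n : ℕ) := Fin n → ℤ

/-- d(x) = ∑ᵢ |xᵢ|, the graph distance to the origin on ℤⁿ. -/
def latDist {n : ℕ} (x : Lat n) : ℕ := ∑ i, (x i).natAbs

/-- x ~ y iff ∑ᵢ |xᵢ − yᵢ| = 1. -/
def adjacent {n : ℕ} (x y : Lat n) : Prop := (∑ i, (x i - y i).natAbs) = 1

instance {n : ℕ} (x y : Lat n) : Decidable (adjacent x y) :=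
  decidable_of_iff ((∑ i, (x i - y i).natAbs) = 1) Iff.rfl

def unitVec {n : ℕ} (i : Fin n) : Lat n := fun j => if j = i then 1 else 0

/-- The graph Laplacian Δu(x) = ∑_{y ~ x} (u(y) − u(x)) on ℤⁿ. -/
def lapl {n : ℕ} (u : Lat n → ℝ) (x : Lat n) : ℝ :=
  ∑ i, (u (x + unitVec i) + u (x - unitVec i) - 2 * u x)

/-- The filter of neighborhoods of infinity (d(x) → +∞) on ℤⁿ. -/
def atInfty (n : ℕ) : Filter (Lat n) := Filter.comap latDist Filter.atTop

/-- The Dirac mass at p. -/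
def dirac {n : ℕ} (p x : Lat n) : ℝ := if x = p then 1 else 0

/-- (u,v) is a topological solution of Δu = λ eᵛ(eᵘ−1) + g, Δv = λ eᵘ(eᵛ−1) + h
with u, v → 0 at infinity. -/
def IsTopSol {n : ℕ} (lam : ℝ) (g h u v : Lat n → ℝ) : Prop :=
  (∀ x, lapl u x = lam * Real.exp (v x) * (Real.exp (u x) - 1) + g x) ∧
  (∀ x, lapl v x = lam * Real.exp (u x) * (Real.exp (v x) - 1) + h x) ∧
  Filter.Tendsto u (atInfty n) (nhds 0) ∧
  Filter.Tendsto v (atInfty n) (nhds 0)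

/-- The boundary δΩ = {y ∉ Ω : ∃ x ∈ Ω, x ~ y}. -/
def bdry {n : ℕ} (Ω : Set (Lat n)) : Set (Lat n) := {y | y ∉ Ω ∧ ∃ x ∈ Ω, adjacent x y}

/-- Ω is connected: any two of its vertices are joined by a path of adjacent
vertices lying in Ω. -/
def PathConnectedIn {n : ℕ} (Ω : Set (Lat n)) : Prop :=
  ∀ x ∈ Ω, ∀ y ∈ Ω, ∃ (k : ℕ) (c : ℕ → Lat n),
    c 0 = x ∧ c k = y ∧ (∀ i ≤ k, c i ∈ Ω) ∧ ∀ i < k, adjacent (c i) (c (i + 1))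

/-- The iterative scheme: u₀ = v₀ = 0 and, for k ≥ 1,
(Δ − L)u_k = λ e^{v_{k−1}} (e^{u_{k−1}} − 1) + g − L u_{k−1} in Ω,
(Δ − L)v_k = λ e^{u_{k−1}} (e^{v_{k−1}} − 1) + h − L v_{k−1} in Ω,
with u_k = v_k = 0 off Ω (in particular on δΩ). -/
def IterSeq {n : ℕ} (Ω : Set (Lat n)) (L lam : ℝ) (g h : Lat n → ℝ)
    (u v : ℕ → Lat n → ℝ) : Prop :=
  (∀ x, u 0 x = 0) ∧ (∀ x, v 0 x = 0) ∧
  (∀ k : ℕ, ∀ x ∈ Ω,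
      lapl (u (k + 1)) x - L * u (k + 1) x
        = lam * Real.exp (v k x) * (Real.exp (u k x) - 1) + g x - L * u k x) ∧
  (∀ k : ℕ, ∀ x ∈ Ω,
      lapl (v (k + 1)) x - L * v (k + 1) x
        = lam * Real.exp (u k x) * (Real.exp (v k x) - 1) + h x - L * v k x) ∧
  (∀ k : ℕ, ∀ x, x ∉ Ω → u (k + 1) x = 0) ∧
  (∀ k : ℕ, ∀ x, x ∉ Ω → v (k + 1) x = 0)

/-- Maximum principle for `Δ - L`, `L > 0`, on a finite set. The sign condition outside `Ω` is only
required at lattice neighbours of points of `Ω`. -/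
lemma max_principle {n : ℕ} {Ω : Set (Lat n)} (hfin : Ω.Finite) {L : ℝ} (hL : 0 < L)
    (f : Lat n → ℝ) (hf : ∀ x ∈ Ω, 0 ≤ lapl f x - L * f x)
    (hb : ∀ x ∈ Ω, ∀ i, (x + unitVec i ∉ Ω → f (x + unitVec i) ≤ 0) ∧
      (x - unitVec i ∉ Ω → f (x - unitVec i) ≤ 0)) :
    ∀ x ∈ Ω, f x ≤ 0 := by
  intro x hx
  obtain ⟨z, hz, hmax⟩ := Set.exists_max_image Ω f hfin ⟨x, hx⟩
  refine (hmax x hx).trans ?_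
  by_contra! hpos
  have hlap : lapl f z ≤ 0 := by
    unfold lapl
    refine Finset.sum_nonpos fun i _ => ?_
    have h1 : f (z + unitVec i) ≤ f z := by
      by_cases hm : z + unitVec i ∈ Ω
      · exact hmax _ hm
      · exact ((hb z hz i).1 hm).trans hpos.le
    have h2 : f (z - unitVec i) ≤ f z := by
      by_cases hm : z - unitVec i ∈ Ω
      · exact hmax _ hm
      · exact ((hb z hz i).2 hm).trans hpos.le
    linarith
  have := hf z hz
  have := mul_pos hL hpos
  linarith

lemma lapl_sub {n : ℕ} (f f' : Lat n → ℝ) (x : Lat n) :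
    lapl (fun y => f y - f' y) x = lapl f x - lapl f' x := by
  unfold lapl
  rw [← Finset.sum_sub_distrib]
  exact Finset.sum_congr rfl fun i _ => by ring

/-- The nonlinearity `λ e^b (e^a - 1) - L a` is decreasing in both variables on `a, b ≤ 0`. -/
lemma nonlin_antitone {lam L a a' b b' : ℝ} (hlam : 0 < lam) (hL : lam ≤ L)
    (ha : a' ≤ a) (ha0 : a ≤ 0) (hb : b' ≤ b) (hb0 : b ≤ 0) :
    lam * exp b * (exp a - 1) - L * a ≤ lam * exp b' * (exp a' - 1) - L * a' := by
  have hea : exp a ≤ 1 := exp_le_one_iff.2 ha0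
  have heb' : exp b' ≤ 1 := exp_le_one_iff.2 (hb.trans hb0)
  have hebb : exp b' ≤ exp b := exp_le_exp.2 hb
  have heaa : exp a' ≤ exp a := exp_le_exp.2 ha
  have h1 : exp b * (exp a - 1) ≤ exp b' * (exp a - 1) :=
    mul_le_mul_of_nonpos_right hebb (by linarith)
  have h2 : exp a - exp a' ≤ a - a' := by
    have e : exp a' = exp a * exp (a' - a) := by rw [← exp_add]; congr 1; ring
    have h3 := add_one_le_exp (a' - a)
    have h4 : exp (a' - a) ≤ 1 := exp_le_one_iff.2 (by linarith)
    have h5 : exp a * (1 - exp (a' - a)) ≤ 1 * (1 - exp (a' - a)) :=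
      mul_le_mul_of_nonneg_right hea (by linarith)
    rw [e]; linarith
  have h3 : exp b' * (exp a - exp a') ≤ 1 * (exp a - exp a') :=
    mul_le_mul_of_nonneg_right heb' (by linarith)
  have h4 : lam * (exp b * (exp a - 1)) ≤ lam * (exp b' * (exp a' - 1) + (a - a')) :=
    mul_le_mul_of_nonneg_left (by linarith) hlam.le
  have h5 : lam * (a - a') ≤ L * (a - a') :=
    mul_le_mul_of_nonneg_right hL (by linarith)
  linarith

/-- The iteration vanishes off `Ω`, including at step `0`. -/
lemma iter_eq_zero {n : ℕ} {Ω : Set (Lat n)} {u : ℕ → Lat n → ℝ} (h0 : ∀ x, u 0 x = 0)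
    (hs : ∀ k : ℕ, ∀ x, x ∉ Ω → u (k + 1) x = 0) (k : ℕ) {x : Lat n} (hx : x ∉ Ω) :
    u k x = 0 := by
  cases k with
  | zero => exact h0 x
  | succ k => exact hs k x hx

/-- Comparison for one component of one step of the scheme. -/
lemma step_mono {n : ℕ} {Ω : Set (Lat n)} (hfin : Ω.Finite) {L : ℝ} (hL : 0 < L)
    {f f' F F' : Lat n → ℝ} (hf : ∀ x ∈ Ω, lapl f x - L * f x = F x)
    (hf' : ∀ x ∈ Ω, lapl f' x - L * f' x = F' x) (hF : ∀ x ∈ Ω, F x ≤ F' x)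
    (h0 : ∀ x, x ∉ Ω → f x = 0) (h0' : ∀ x, x ∉ Ω → f' x = 0) (x : Lat n) : f' x ≤ f x := by
  by_cases hx : x ∈ Ω
  · have := max_principle hfin hL (fun y => f' y - f y)
      (fun y hy => by
        rw [lapl_sub]
        have := hf y hy; have := hf' y hy; have := hF y hy
        linarith)
      (fun y _ i => ⟨fun hm => by simp [h0 _ hm, h0' _ hm],
        fun hm => by simp [h0 _ hm, h0' _ hm]⟩) x hx
    simpa using this
  · rw [h0' x hx, h0 x hx]

/-- The scheme is monotone: `u_{k+1} ≤ u_k ≤ 0` and `v_{k+1} ≤ v_k ≤ 0`. -/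
lemma iter_mono {n : ℕ} {Ω : Set (Lat n)} (hfin : Ω.Finite) {L lam : ℝ} (hlam : 0 < lam)
    (hL : lam ≤ L) {g h : Lat n → ℝ} (hg : ∀ x, 0 ≤ g x) (hh : ∀ x, 0 ≤ h x)
    {u v : ℕ → Lat n → ℝ} (hiter : IterSeq Ω L lam g h u v) (k : ℕ) :
    (∀ x, u (k + 1) x ≤ u k x) ∧ (∀ x, v (k + 1) x ≤ v k x) ∧
      (∀ x, u k x ≤ 0) ∧ (∀ x, v k x ≤ 0) := by
  obtain ⟨u0, v0, hu, hv, hub, hvb⟩ := hiter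
  have hL0 : 0 < L := hlam.trans_le hL
  have hub' : ∀ k x, x ∉ Ω → u k x = 0 := fun k x hx => iter_eq_zero u0 hub k hx
  have hvb' : ∀ k x, x ∉ Ω → v k x = 0 := fun k x hx => iter_eq_zero v0 hvb k hx
  induction k with
  | zero =>
    have z : ∀ f : Lat n → ℝ, (∀ x, f x = 0) → ∀ x ∈ Ω, lapl f x - L * f x = 0 := by
      intro f hf x _
      simp [lapl, hf]
    refine ⟨?_, ?_, fun x => (u0 x).le, fun x => (v0 x).le⟩
    · exact step_mono hfin hL0 (z _ u0) (hu 0) (fun x _ => by simpa [u0, v0] using hg x)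
        (hub' 0) (hub' 1)
    · exact step_mono hfin hL0 (z _ v0) (hv 0) (fun x _ => by simpa [u0, v0] using hh x)
        (hvb' 0) (hvb' 1)
  | succ k ih =>
    obtain ⟨iu, iv, iu0, iv0⟩ := ih
    refine ⟨?_, ?_, fun x => (iu x).trans (iu0 x), fun x => (iv x).trans (iv0 x)⟩
    · refine step_mono hfin hL0 (hu k) (hu (k + 1)) (fun x _ => ?_) (hub' _) (hub' _)
      have := nonlin_antitone hlam hL (iu x) (iu0 x) (iv x) (iv0 x)
      linarith
    · refine step_mono hfin hL0 (hv k) (hv (k + 1)) (fun x _ => ?_) (hvb' _) (hvb' _)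
      have := nonlin_antitone hlam hL (iv x) (iv0 x) (iu x) (iu0 x)
      linarith

/-- A barrier: a function with Laplacian at least `C` everywhere which is nonpositive on `Ω` and at
all lattice neighbours of `Ω`. -/
lemma exists_barrier {n : ℕ} (i₀ : Fin n) {Ω : Set (Lat n)} (hfin : Ω.Finite) (C : ℝ) :
    ∃ w : Lat n → ℝ, (∀ x, C ≤ lapl w x) ∧ (∀ x ∈ Ω, w x ≤ 0) ∧
      ∀ x ∈ Ω, ∀ i, w (x + unitVec i) ≤ 0 ∧ w (x - unitVec i) ≤ 0 := by
  obtain ⟨M, hM⟩ := (hfin.image fun x : Lat n => |(x i₀ : ℝ)|).bddAbove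
  have hM' : ∀ x ∈ Ω, |(x i₀ : ℝ)| ≤ M := fun x hx => hM ⟨x, hx, rfl⟩
  have key : ∀ y : ℝ, |y| ≤ M + 1 → |C| * y ^ 2 - |C| * (M + 1) ^ 2 ≤ 0 := by
    intro y hy
    have h1 : y ^ 2 ≤ (M + 1) ^ 2 := sq_le_sq' (by linarith [neg_abs_le y]) ((le_abs_self y).trans hy)
    have := mul_le_mul_of_nonneg_left h1 (abs_nonneg C)
    linarith
  have hunit : ∀ i : Fin n, |((unitVec i : Lat n) i₀ : ℝ)| ≤ 1 := by
    intro i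
    unfold unitVec
    split_ifs <;> simp
  refine ⟨fun x => |C| * (x i₀ : ℝ) ^ 2 - |C| * (M + 1) ^ 2, fun x => ?_, fun x hx => ?_,
    fun x hx i => ⟨?_, ?_⟩⟩
  · -- Only the direction `i₀` contributes, with value `2 |C|`.
    have e : ∀ i : Fin n, (|C| * ((x + unitVec i) i₀ : ℤ) ^ 2 - |C| * (M + 1) ^ 2
        + (|C| * ((x - unitVec i) i₀ : ℤ) ^ 2 - |C| * (M + 1) ^ 2)
        - 2 * (|C| * (x i₀ : ℝ) ^ 2 - |C| * (M + 1) ^ 2) : ℝ)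
        = if i₀ = i then 2 * |C| else 0 := by
      intro i
      simp only [Pi.add_apply, Pi.sub_apply, unitVec]
      split_ifs <;> push_cast <;> ring
    unfold lapl
    rw [Finset.sum_congr rfl fun i _ => e i]
    simp only [Finset.sum_ite_eq, Finset.mem_univ, if_true]
    linarith [le_abs_self C, abs_nonneg C]
  · exact key _ (by linarith [hM' x hx])
  · refine key _ ?_
    simp only [Pi.add_apply, Int.cast_add]
    exact (abs_add_le _ _).trans (add_le_add (hM' x hx) (hunit i))
  · refine key _ ?_
    simp only [Pi.sub_apply, Int.cast_sub]
    exact (abs_sub _ _).trans (add_le_add (hM' x hx) (hunit i))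

/-- A barrier `w` with `Δw ≥ g` stays below one component `u` of the scheme, whatever the other
component `v` is, because the reaction term is nonpositive for `u ≤ 0`. -/
lemma iter_lower_bound {n : ℕ} {Ω : Set (Lat n)} (hfin : Ω.Finite) {L lam : ℝ} (hlam : 0 < lam)
    (hL : 0 < L) {g w : Lat n → ℝ} {u v : ℕ → Lat n → ℝ} (u0 : ∀ x, u 0 x = 0)
    (hu : ∀ k : ℕ, ∀ x ∈ Ω, lapl (u (k + 1)) x - L * u (k + 1) x
        = lam * exp (v k x) * (exp (u k x) - 1) + g x - L * u k x)
    (hub : ∀ k : ℕ, ∀ x, x ∉ Ω → u (k + 1) x = 0) (hneg : ∀ k x, u k x ≤ 0)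
    (hw : ∀ x ∈ Ω, g x ≤ lapl w x) (hw0 : ∀ x ∈ Ω, w x ≤ 0)
    (hwb : ∀ x ∈ Ω, ∀ i, w (x + unitVec i) ≤ 0 ∧ w (x - unitVec i) ≤ 0) (k : ℕ) :
    ∀ x ∈ Ω, w x ≤ u k x := by
  induction k with
  | zero => intro x hx; rw [u0]; exact hw0 x hx
  | succ k ih =>
    intro x hx
    have := max_principle hfin hL (fun y => w y - u (k + 1) y)
      (fun y hy => by
        rw [lapl_sub]
        have h1 := hu k y hy
        have h2 := hw y hy
        have h3 : lam * exp (v k y) * (exp (u k y) - 1) ≤ 0 :=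
          mul_nonpos_of_nonneg_of_nonpos (mul_pos hlam (exp_pos _)).le
            (by linarith [exp_le_one_iff.2 (hneg k y)])
        have h4 : L * w y ≤ L * u k y := mul_le_mul_of_nonneg_left (ih y hy) hL.le
        linarith)
      (fun y hy i => ⟨fun hm => by simpa [hub k _ hm] using (hwb y hy i).1,
        fun hm => by simpa [hub k _ hm] using (hwb y hy i).2⟩) x hx
    linarith

lemma tendsto_lapl {n : ℕ} {u : ℕ → Lat n → ℝ} {U : Lat n → ℝ}
    (h : ∀ x, Tendsto (fun k => u k x) atTop (nhds (U x))) (x : Lat n) :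
    Tendsto (fun k => lapl (u k) x) atTop (nhds (lapl U x)) := by
  unfold lapl
  exact tendsto_finsetSum _ fun i _ => ((h _).add (h _)).sub ((h x).const_mul 2)

/-- Pointwise limits of the scheme solve the limit equation. -/
lemma limit_eq {n : ℕ} {L lam : ℝ} {g : Lat n → ℝ} {u v : ℕ → Lat n → ℝ} {U V : Lat n → ℝ}
    {x : Lat n} (hu : ∀ k : ℕ, lapl (u (k + 1)) x - L * u (k + 1) x
        = lam * exp (v k x) * (exp (u k x) - 1) + g x - L * u k x)
    (hU : ∀ x, Tendsto (fun k => u k x) atTop (nhds (U x)))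
    (hV : ∀ x, Tendsto (fun k => v k x) atTop (nhds (V x))) :
    lapl U x = lam * exp (V x) * (exp (U x) - 1) + g x := by
  have h1 : Tendsto (fun k => lapl (u (k + 1)) x - L * u (k + 1) x) atTop
      (nhds (lapl U x - L * U x)) :=
    (((tendsto_lapl hU x).sub ((hU x).const_mul L))).comp (tendsto_add_atTop_nat 1)
  have h2 : Tendsto (fun k => lam * exp (v k x) * (exp (u k x) - 1) + g x - L * u k x) atTop
      (nhds (lam * exp (V x) * (exp (U x) - 1) + g x - L * U x)) :=
    (((((hV x).rexp).const_mul lam).mul ((hU x).rexp.sub_const 1)).add_const (g x)).sub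
      ((hU x).const_mul L)
  simp only [hu] at h1
  have := tendsto_nhds_unique h1 h2
  linarith

/-- A pointwise decreasing sequence that vanishes off `Ω` and lies above a fixed function on `Ω`
converges pointwise. -/
lemma exists_limit {n : ℕ} {Ω : Set (Lat n)} {u : ℕ → Lat n → ℝ} {w : Lat n → ℝ}
    (hanti : ∀ k x, u (k + 1) x ≤ u k x) (hoff : ∀ k x, x ∉ Ω → u k x = 0)
    (hlow : ∀ k, ∀ x ∈ Ω, w x ≤ u k x) :
    ∃ U : Lat n → ℝ, ∀ x, Tendsto (fun k => u k x) atTop (nhds (U x)) := by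
  refine ⟨fun x => ⨅ k, u k x, fun x => ?_⟩
  refine tendsto_atTop_ciInf (antitone_nat_of_succ_le fun k => hanti k x) ?_
  by_cases hx : x ∈ Ω
  · exact ⟨w x, by rintro _ ⟨k, rfl⟩; exact hlow k x hx⟩
  · exact ⟨0, by rintro _ ⟨k, rfl⟩; exact (hoff k x hx).ge⟩

lemma source_nonneg {n k : ℕ} (m : Fin k → ℕ) (p : Fin k → Lat n) (x : Lat n) :
    0 ≤ 4 * Real.pi * ∑ j, (m j : ℝ) * dirac (p j) x := by
  refine mul_nonneg (by positivity) (Finset.sum_nonneg fun j _ => ?_)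
  unfold dirac
  split_ifs <;> simp

/-- the iterative sequences converge pointwise on Ω̄ to a
solution (u_Ω, v_Ω) of the system in Ω vanishing on δΩ. -/
theorem iterative_scheme_converges
    {n : ℕ} (hn : 2 ≤ n) (lam L : ℝ) (hlam : 0 < lam) (hL : 2 * lam < L)
    {k₁ k₂ : ℕ} (m : Fin k₁ → ℕ) (nn : Fin k₂ → ℕ)
    (p : Fin k₁ → Lat n) (q : Fin k₂ → Lat n)
    (g h : Lat n → ℝ)
    (hg : g = fun x => 4 * Real.pi * ∑ j, (m j : ℝ) * dirac (p j) x)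
    (hh : h = fun x => 4 * Real.pi * ∑ j, (nn j : ℝ) * dirac (q j) x)
    (Ω : Set (Lat n)) (hfin : Ω.Finite) (hconn : PathConnectedIn Ω)
    (hp : ∀ j, p j ∈ Ω) (hq : ∀ j, q j ∈ Ω)
    (u v : ℕ → Lat n → ℝ) (hiter : IterSeq Ω L lam g h u v) :
    ∃ uΩ vΩ : Lat n → ℝ,
      (∀ x, Filter.Tendsto (fun k => u k x) Filter.atTop (nhds (uΩ x))) ∧
      (∀ x, Filter.Tendsto (fun k => v k x) Filter.atTop (nhds (vΩ x))) ∧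
      (∀ x ∈ Ω, lapl uΩ x = lam * Real.exp (vΩ x) * (Real.exp (uΩ x) - 1) + g x) ∧
      (∀ x ∈ Ω, lapl vΩ x = lam * Real.exp (uΩ x) * (Real.exp (vΩ x) - 1) + h x) ∧
      (∀ x ∈ bdry Ω, uΩ x = 0 ∧ vΩ x = 0) := by
  have hL0 : 0 < L := by linarith
  have hg0 : ∀ x, 0 ≤ g x := fun x => by rw [hg]; exact source_nonneg m p x
  have hh0 : ∀ x, 0 ≤ h x := fun x => by rw [hh]; exact source_nonneg nn q x
  have hmono := iter_mono hfin hlam (by linarith) hg0 hh0 hiter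
  obtain ⟨u0, v0, hu, hv, hub, hvb⟩ := hiter
  have hub' : ∀ k x, x ∉ Ω → u k x = 0 := fun k x hx => iter_eq_zero u0 hub k hx
  have hvb' : ∀ k x, x ∉ Ω → v k x = 0 := fun k x hx => iter_eq_zero v0 hvb k hx
  -- A common bound for `g` and `h` on the finite set `Ω` lets one barrier serve both components.
  obtain ⟨C, hC⟩ := (hfin.image fun x => g x + h x).bddAbove
  have hC' : ∀ x ∈ Ω, g x + h x ≤ C := fun x hx => hC ⟨x, hx, rfl⟩
  obtain ⟨w, hw, hw0, hwb⟩ := exists_barrier (⟨0, by omega⟩ : Fin n) hfin C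
  have hlu := iter_lower_bound hfin hlam hL0 u0 hu hub (fun k => (hmono k).2.2.1)
    (fun x hx => by linarith [hC' x hx, hw x, hh0 x]) hw0 hwb
  have hlv := iter_lower_bound hfin hlam hL0 v0 hv hvb (fun k => (hmono k).2.2.2)
    (fun x hx => by linarith [hC' x hx, hw x, hg0 x]) hw0 hwb
  obtain ⟨U, hU⟩ := exists_limit (fun k => (hmono k).1) hub' hlu
  obtain ⟨V, hV⟩ := exists_limit (fun k => (hmono k).2.1) hvb' hlv
  refine ⟨U, V, hU, hV, fun x hx => limit_eq (fun k => hu k x hx) hU hV,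
    fun x hx => limit_eq (fun k => hv k x hx) hV hU, fun x hx => ⟨?_, ?_⟩⟩
  · exact tendsto_nhds_unique (hU x) (by simp [fun k => hub' k x hx.1])
  · exact tendsto_nhds_unique (hV x) (by simp [fun k => hvb' k x hx.1])

end CS
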